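/- Let (B₁, B₀) be a Rota-Baxter operator on a crossed module of Lie algebras (h, g, dt, φ) over ℝ. On g ⊕ h define the semidirect product bracket [(x, u), (y, v)]_φ = ([x, y], φ(x)(v) − φ(y)(u) + [u, v]) and set B(x, u) = (B₀(x), B₁(u)). Then B is a Rota-Baxter operator of weight 1 on the semidirect product Lie algebra (g ⋉ h, [·,·]_φ); that is, [B(x, u), B(y, v)]_φ = B([B(x, u), (y, v)]_φ + [(x, u), B(y, v)]_φ + [(x, u), (y, v)]_φ) for all x, y ∈ g, u, v ∈ h. -/

import Mathlib

/-- A crossed module of Lie algebras over ℝ: `dt : h → g` a Lie algebra homomorphism and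
`φ : g → Der(h)` a Lie algebra homomorphism into derivations, with equivariance and the
Peiffer identity. -/
structure IsLieCrossedModule {h g : Type*}
    [LieRing h] [LieAlgebra ℝ h] [LieRing g] [LieAlgebra ℝ g]
    (dt : h →ₗ[ℝ] g) (φ : g →ₗ[ℝ] Module.End ℝ h) : Prop where
  dt_bracket : ∀ u v : h, dt ⁅u, v⁆ = ⁅dt u, dt v⁆
  φ_deriv : ∀ (x : g) (u v : h), φ x ⁅u, v⁆ = ⁅φ x u, v⁆ + ⁅u, φ x v⁆
  φ_hom : ∀ (x y : g) (u : h), φ ⁅x, y⁆ u = φ x (φ y u) - φ y (φ x u)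
  equivar : ∀ (x : g) (u : h), dt (φ x u) = ⁅x, dt u⁆
  peiffer : ∀ u v : h, φ (dt u) v = ⁅u, v⁆

/-- Rota-Baxter operator of weight 1 on a Lie algebra. -/
def IsRotaBaxterLie {g : Type*} [LieRing g] [LieAlgebra ℝ g] (B : g →ₗ[ℝ] g) : Prop :=
  ∀ x y : g, ⁅B x, B y⁆ = B (⁅B x, y⁆ + ⁅x, B y⁆ + ⁅x, y⁆)

/-- Rota-Baxter operator on a crossed module of Lie algebras. -/
structure IsLieCMRotaBaxter {h g : Type*}
    [LieRing h] [LieAlgebra ℝ h] [LieRing g] [LieAlgebra ℝ g]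
    (dt : h →ₗ[ℝ] g) (φ : g →ₗ[ℝ] Module.End ℝ h)
    (B₁ : h →ₗ[ℝ] h) (B₀ : g →ₗ[ℝ] g) : Prop where
  rb₁ : IsRotaBaxterLie B₁
  rb₀ : IsRotaBaxterLie B₀
  comm : ∀ u : h, dt (B₁ u) = B₀ (dt u)
  compat : ∀ (x : g) (u : h),
    φ (B₀ x) (B₁ u) = B₁ (φ x (B₁ u) + φ (B₀ x) u + φ x u)

/-- The semidirect product bracket `[(x,u),(y,v)]_φ = ([x,y], φ(x)v − φ(y)u + [u,v])`
on `g ⊕ h`. -/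
def brSdp {h g : Type*} [LieRing h] [LieAlgebra ℝ h] [LieRing g] [LieAlgebra ℝ g]
    (φ : g →ₗ[ℝ] Module.End ℝ h) (m n : g × h) : g × h :=
  (⁅m.1, n.1⁆, φ m.1 n.2 - φ n.1 m.2 + ⁅m.2, n.2⁆)

/-- The operator `B(x,u) = (B₀ x, B₁ u)` on `g ⊕ h`. -/
def Bsdp {h g : Type*} [LieRing h] [LieAlgebra ℝ h] [LieRing g] [LieAlgebra ℝ g]
    (B₁ : h →ₗ[ℝ] h) (B₀ : g →ₗ[ℝ] g) (m : g × h) : g × h :=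
  (B₀ m.1, B₁ m.2)

section Weight

variable {R M N : Type*} [CommRing R] [AddCommGroup M] [Module R M] [AddCommGroup N] [Module R N]

/-- Rota-Baxter operator of weight `c` with respect to a binary operation `br`, which is
passed explicitly so that one notion covers both Lie brackets and the semidirect product bracket on
a product type. -/
def IsRotaBaxter (c : R) (br : M → M → M) (B : M →ₗ[R] M) : Prop :=
  ∀ x y, br (B x) (B y) = B (br (B x) y + br x (B y) + c • br x y)

/-- Compatibility in weight `c` of operators `B₀` on `M` and `B₁` on `N` with a linear map `φ`
from `M` to endomorphisms of `N`. When `φ` is an action of a Lie algebra `M` and `B₀` is a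
Rota-Baxter operator, this makes `(N, φ, B₁)` a representation of the Rota-Baxter Lie algebra
`(M, B₀)`. -/
def IsRotaBaxterAction (c : R) (φ : M →ₗ[R] Module.End R N) (B₀ : M →ₗ[R] M) (B₁ : N →ₗ[R] N) :
    Prop :=
  ∀ x u, φ (B₀ x) (B₁ u) = B₁ (φ x (B₁ u) + φ (B₀ x) u + c • φ x u)

theorem isRotaBaxter_one_iff {br : M → M → M} {B : M →ₗ[R] M} :
    IsRotaBaxter (1 : R) br B ↔
      ∀ x y, br (B x) (B y) = B (br (B x) y + br x (B y) + br x y) := by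
  simp only [IsRotaBaxter, one_smul]

theorem isRotaBaxterAction_one_iff {φ : M →ₗ[R] Module.End R N} {B₀ : M →ₗ[R] M}
    {B₁ : N →ₗ[R] N} :
    IsRotaBaxterAction (1 : R) φ B₀ B₁ ↔
      ∀ x u, φ (B₀ x) (B₁ u) = B₁ (φ x (B₁ u) + φ (B₀ x) u + φ x u) := by
  simp only [IsRotaBaxterAction, one_smul]

end Weight

section Semidirect

variable {R g h : Type*} [CommRing R] [LieRing g] [LieAlgebra R g] [LieRing h] [LieAlgebra R h]

/-- The semidirect product bracket on `g × h` over an arbitrary commutative ring; `brSdp` is the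
case `R = ℝ`. It is a Lie bracket when `φ` is a Lie algebra homomorphism into derivations. -/
def semidirectBracket (φ : g →ₗ[R] Module.End R h) (m n : g × h) : g × h :=
  (⁅m.1, n.1⁆, φ m.1 n.2 - φ n.1 m.2 + ⁅m.2, n.2⁆)

theorem stmt17_general {c : R} {φ : g →ₗ[R] Module.End R h} {B₀ : g →ₗ[R] g} {B₁ : h →ₗ[R] h}
    (hB₀ : IsRotaBaxter c Bracket.bracket B₀) (hB₁ : IsRotaBaxter c Bracket.bracket B₁)
    (hφ : IsRotaBaxterAction c φ B₀ B₁) :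
    IsRotaBaxter c (semidirectBracket φ) (B₀.prodMap B₁) := by
  rintro ⟨x, u⟩ ⟨y, v⟩
  refine Prod.ext (hB₀ x y) ?_
  calc φ (B₀ x) (B₁ v) - φ (B₀ y) (B₁ u) + ⁅B₁ u, B₁ v⁆
    _ = B₁ (φ x (B₁ v) + φ (B₀ x) v + c • φ x v)
          - B₁ (φ y (B₁ u) + φ (B₀ y) u + c • φ y u)
          + B₁ (⁅B₁ u, v⁆ + ⁅u, B₁ v⁆ + c • ⁅u, v⁆) := by
      rw [hφ x v, hφ y u, hB₁ u v]
    _ = B₁ ((φ (B₀ x) v - φ y (B₁ u) + ⁅B₁ u, v⁆)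
          + (φ x (B₁ v) - φ (B₀ y) u + ⁅u, B₁ v⁆)
          + c • (φ x v - φ y u + ⁅u, v⁆)) := by
      rw [← map_sub, ← map_add]
      congr 1
      module

end Semidirect

theorem stmt17 {h g : Type*}
    [LieRing h] [LieAlgebra ℝ h] [LieRing g] [LieAlgebra ℝ g]
    (dt : h →ₗ[ℝ] g) (φ : g →ₗ[ℝ] Module.End ℝ h)
    (hcm : IsLieCrossedModule dt φ) (B₁ : h →ₗ[ℝ] h) (B₀ : g →ₗ[ℝ] g)
    (hrb : IsLieCMRotaBaxter dt φ B₁ B₀) :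
    ∀ m n : g × h,
      brSdp φ (Bsdp B₁ B₀ m) (Bsdp B₁ B₀ n)
        = Bsdp B₁ B₀
            (brSdp φ (Bsdp B₁ B₀ m) n + brSdp φ m (Bsdp B₁ B₀ n) + brSdp φ m n) :=
  isRotaBaxter_one_iff.1 <| stmt17_general (isRotaBaxter_one_iff.2 hrb.rb₀)
    (isRotaBaxter_one_iff.2 hrb.rb₁) (isRotaBaxterAction_one_iff.2 hrb.compat)
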